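/- (Lemma 1.) Let (ξ_n)_{n≥1} be i.i.d. real random variables with E[ξ_1] > 0 and E[ξ_1²] < ∞, let μ > 0, h ∈ [0,∞), and w ≥ 0, and let (W_n)_{n≥0} be the DE-CuSum sequence started at w. Define the last exit time ν_W = sup{n ≥ 1 : W_n ≤ w} (with sup ∅ = 0) and ν_R = sup{n ≥ 1 : S_n ≤ 0} (with sup ∅ = 0). Then, with q = ℙ(S_n ≥ 0 for all n ≥ 1), E[ν_W] ≤ E[ν_R] + ⌈h/μ⌉/q < ∞; in particular ν_W is finite almost surely and its expectation is bounded by a finite constant that does not depend on any detection threshold. -/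

import Mathlib

open MeasureTheory Filter Set ProbabilityTheory
open scoped ENNReal

/-- DE-CuSum sequence with parameters `μ > 0` and `h ∈ [0,∞)`, started at `w`:
`W_{n+1} = min (W_n + μ) 0` if `W_n < 0`, and `W_{n+1} = max (W_n + ξ_{n+1}) (-h)` if `W_n ≥ 0`. -/
noncomputable def deCusum (ξ : ℕ → ℝ) (μ h w : ℝ) : ℕ → ℝ
  | 0 => w
  | n + 1 =>
    if deCusum ξ μ h w n < 0 then min (deCusum ξ μ h w n + μ) 0
    else max (deCusum ξ μ h w n + ξ n) (-h)
/-- Partial sum `S_n = ξ_1 + ⋯ + ξ_n` (with the increments indexed from `0`), `S_0 = 0`. -/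
def psum (ξ : ℕ → ℝ) (n : ℕ) : ℝ := ∑ k ∈ Finset.range n, ξ k
/-- Last time `n ≥ 1` at which `P n` holds, valued in `ℕ∞` with `sup ∅ = 0`. -/
noncomputable def lastTime (P : ℕ → Prop) : ℕ∞ :=
  sSup ((↑) '' {n : ℕ | 1 ≤ n ∧ P n})

/-!
Proof idea. Call an increment *used* if it enters the recursion, that is, if `W` is nonnegative at
its time. Whether an increment is used is decided by its past, so by optional skipping the used
increments are again an i.i.d. copy of `ξ`. Since `W_n` dominates `w` plus the sum of the increments
used before time `n`, the last exit time `ν_W` is at most the last exit time of the walk of used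
increments, which is distributed as `ν_R`, plus the number of times at which `W` is negative.

Each negative time is followed within `⌈h/μ⌉` steps by a return of `W` to the nonnegative half-line.
With probability `q` the walk restarted at a return stays nonnegative, in which case that return is
the last one; these events being disjoint, the expected number of returns is at most `1/q`.

Finally `q > 0` because the walk tends to `∞`, hence stays nonnegative when restarted at its
minimum, and `E ν_R < ∞` because `δ ν_R` is at most the maximum of the walk with increments
`δ - min ξ c`, which has negative drift for suitable `c` and `δ` and whose maximum has finite mean
by Kingman's second-moment bound.
-/

section LastTime

variable {p : ℕ → Prop}

lemma lastTime_le_iff {B : ℕ∞} : lastTime p ≤ B ↔ ∀ n : ℕ, 1 ≤ n → p n → (n : ℕ∞) ≤ B := by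
  simp only [lastTime, sSup_le_iff, forall_mem_image, mem_ofPred_eq, and_imp]

lemma le_lastTime {n : ℕ} (hn : 1 ≤ n) (hp : p n) : (n : ℕ∞) ≤ lastTime p :=
  lastTime_le_iff.1 le_rfl n hn hp

lemma lastTime_mono {q : ℕ → Prop} (hpq : ∀ n, p n → q n) : lastTime p ≤ lastTime q :=
  lastTime_le_iff.2 fun _ hn hp => le_lastTime hn (hpq _ hp)

lemma coe_lastTime_le_iff {B : ℝ≥0∞} :
    (lastTime p : ℝ≥0∞) ≤ B ↔ ∀ n : ℕ, 1 ≤ n → p n → (n : ℝ≥0∞) ≤ B := by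
  rw [← ENat.le_floor, lastTime_le_iff]
  simp only [ENat.le_floor, ENat.toENNReal_coe]

lemma measurable_lastTime {Ω : Type*} [MeasurableSpace Ω] {p : Ω → ℕ → Prop}
    (hp : ∀ n, MeasurableSet {ω | p ω n}) :
    Measurable fun ω => (lastTime (p ω) : ℝ≥0∞) := by
  refine measurable_of_Iic fun B => ?_
  have : (fun ω => (lastTime (p ω) : ℝ≥0∞)) ⁻¹' Iic B =
      ⋂ n : ℕ, {ω | 1 ≤ n → p ω n → (n : ℝ≥0∞) ≤ B} := by
    ext ω
    simp [coe_lastTime_le_iff]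
  rw [this]
  exact .iInter fun n => (MeasurableSet.const _).imp ((hp n).imp (.const _))

end LastTime

section OptionalSkipping

/-- The subsequence of `x` at the successive indices satisfying `p`. It is only meaningful when
infinitely many indices satisfy `p`, since `Nat.nth` returns `0` once they are exhausted. -/
noncomputable def subseqAt {E : Type*} (p : ℕ → Prop) (x : ℕ → E) (j : ℕ) : E := x (Nat.nth p j)

lemma subseqAt_count {E : Type*} {p : ℕ → Prop} [DecidablePred p] (x : ℕ → E) {n : ℕ}
    (hn : p n) : subseqAt p x (Nat.count p n) = x n := by
  rw [subseqAt, Nat.nth_count hn]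

lemma nth_eq_iff_count_eq {p : ℕ → Prop} [DecidablePred p] (hp : {n | p n}.Infinite) {j n : ℕ} :
    Nat.nth p j = n ↔ p n ∧ Nat.count p n = j := by
  constructor
  · rintro rfl
    exact ⟨Nat.nth_mem_of_infinite hp j, Nat.count_nth_of_infinite hp j⟩
  · rintro ⟨hn, rfl⟩
    exact Nat.nth_count hn

variable {Ω E : Type*} {mΩ : MeasurableSpace Ω} [MeasurableSpace E]
  {P : Measure Ω} {p : Ω → ℕ → Prop} {ξ : ℕ → Ω → E}

lemma measurable_count [∀ ω, DecidablePred (p ω)] {n : ℕ}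
    (hp : ∀ k < n, MeasurableSet {ω | p ω k}) : Measurable fun ω => Nat.count (p ω) n := by
  induction n with
  | zero => simp
  | succ n ih =>
    simp only [Nat.count_succ]
    exact (ih fun k hk => hp k (hk.trans n.lt_succ_self)).add
      (.ite (hp n n.lt_succ_self) measurable_const measurable_const)

lemma measurableSet_nth_eq (hinf : ∀ ω, {n | p ω n}.Infinite) {n : ℕ}
    (hp : ∀ k ≤ n, MeasurableSet {ω | p ω k}) (j : ℕ) :
    MeasurableSet {ω | Nat.nth (p ω) j = n} := by
  classical
  simp only [nth_eq_iff_count_eq (hinf _)]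
  exact (hp n le_rfl).inter
    (measurable_count (fun k hk => hp k hk.le) (measurableSet_singleton j))

lemma measurable_subseqAt (hinf : ∀ ω, {n | p ω n}.Infinite)
    (hp : ∀ n, MeasurableSet {ω | p ω n}) (hξ : ∀ n, Measurable (ξ n)) (j : ℕ) :
    Measurable fun ω => subseqAt (p ω) (ξ · ω) j := by
  have hnth : Measurable fun ω => Nat.nth (p ω) j :=
    measurable_to_countable' fun n => measurableSet_nth_eq hinf (fun k _ => hp k) j
  exact (measurable_from_prod_countable_right (f := fun z : ℕ × Ω => ξ z.1 z.2) hξ).comp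
    (hnth.prodMk measurable_id)

-- The earlier selected indices are below the `j`-th, so only terms with index `< n` intervene.
lemma measurableSet_nth_eq_and_subseqAt_mem (hinf : ∀ ω, {n | p ω n}.Infinite) {n : ℕ}
    (hp : ∀ k ≤ n, MeasurableSet {ω | p ω k}) (hξ : ∀ k < n, Measurable (ξ k))
    {A : ℕ → Set E} (hA : ∀ i, MeasurableSet (A i)) (j : ℕ) :
    MeasurableSet {ω | Nat.nth (p ω) j = n ∧ ∀ i < j, subseqAt (p ω) (ξ · ω) i ∈ A i} := by
  have : {ω | Nat.nth (p ω) j = n ∧ ∀ i < j, subseqAt (p ω) (ξ · ω) i ∈ A i} =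
      {ω | Nat.nth (p ω) j = n} ∩
        ⋂ i < j, ⋃ k < n, {ω | Nat.nth (p ω) i = k} ∩ ξ k ⁻¹' A i := by
    ext ω
    simp only [subseqAt, mem_ofPred_eq, mem_inter_iff, mem_iInter, mem_iUnion, mem_preimage]
    refine and_congr_right fun hn => forall₂_congr fun i hi => ?_
    constructor
    · exact fun h => ⟨_, hn ▸ Nat.nth_strictMono (hinf ω) hi, rfl, h⟩
    · rintro ⟨_, _, rfl, h⟩
      exact h
  rw [this]
  refine (measurableSet_nth_eq hinf hp j).inter
    (.iInter fun i => .iInter fun _ => .iUnion fun k => .iUnion fun hk => ?_)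
  exact (measurableSet_nth_eq hinf (fun l hl => hp l (hl.trans hk.le)) i).inter (hξ k hk (hA i))

lemma measure_forall_lt_subseqAt_mem {𝓕 : Filtration ℕ mΩ} {ν : Measure E}
    [IsProbabilityMeasure P] (hξ𝓕 : ∀ n, Measurable[𝓕 (n + 1)] (ξ n))
    (hind : ∀ n, Indep (𝓕 n) (.comap (ξ n) inferInstance) P) (hlaw : ∀ n, P.map (ξ n) = ν)
    (hinf : ∀ ω, {n | p ω n}.Infinite) (hp : ∀ n, MeasurableSet[𝓕 n] {ω | p ω n})
    {A : ℕ → Set E} (hA : ∀ i, MeasurableSet (A i)) (j : ℕ) :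
    P {ω | ∀ i < j, subseqAt (p ω) (ξ · ω) i ∈ A i} = ∏ i ∈ Finset.range j, ν (A i) := by
  have hξ n : Measurable (ξ n) := (hξ𝓕 n).mono (𝓕.le _) le_rfl
  induction j with
  | zero => simp
  | succ j ih =>
    set H : Set Ω := {ω | ∀ i < j, subseqAt (p ω) (ξ · ω) i ∈ A i} with hH
    set N : ℕ → Set Ω := fun n => {ω | Nat.nth (p ω) j = n} with hN
    have hNH n : MeasurableSet[𝓕 n] (N n ∩ H) :=
      measurableSet_nth_eq_and_subseqAt_mem hinf (fun k hk => 𝓕.mono hk _ (hp k))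
        (fun k hk => (hξ𝓕 k).mono (𝓕.mono hk) le_rfl) hA j
    have hdisj : Pairwise (Function.onFun Disjoint N) := fun a b hab =>
      Set.disjoint_left.2 fun _ ha hb => hab (ha.symm.trans hb)
    have hsucc : {ω | ∀ i < j + 1, subseqAt (p ω) (ξ · ω) i ∈ A i} =
        ⋃ n, N n ∩ H ∩ ξ n ⁻¹' A j := by
      ext ω
      simp only [hN, hH, Nat.forall_lt_succ_right, subseqAt, mem_ofPred_eq, mem_iUnion,
        mem_inter_iff, mem_preimage]
      grind
    have hcover : H = ⋃ n, N n ∩ H := by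
      ext ω
      simp [hN]
    calc P {ω | ∀ i < j + 1, subseqAt (p ω) (ξ · ω) i ∈ A i}
      _ = ∑' n, P (N n ∩ H ∩ ξ n ⁻¹' A j) := by
        rw [hsucc, measure_iUnion (fun a b hab => (hdisj hab).mono
          (fun _ h => h.1.1) fun _ h => h.1.1) fun n => (𝓕.le n _ (hNH n)).inter (hξ n (hA j))]
      _ = ∑' n, P (N n ∩ H) * ν (A j) := tsum_congr fun n => by
        rw [(Indep_iff _ _ _).1 (hind n) _ _ (hNH n) ⟨_, hA j, rfl⟩,
          ← Measure.map_apply (hξ n) (hA j), hlaw]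
      _ = P H * ν (A j) := by
        rw [ENNReal.tsum_mul_right, ← measure_iUnion (fun a b hab => (hdisj hab).mono
          inter_subset_left inter_subset_left) fun n => 𝓕.le n _ (hNH n), ← hcover]
      _ = ∏ i ∈ Finset.range (j + 1), ν (A i) := by rw [ih, Finset.prod_range_succ]

lemma map_eq_infinitePi_of_forall_lt {ν : ℕ → Measure E} [∀ i, IsProbabilityMeasure (ν i)]
    (hξ : ∀ i, Measurable (ξ i))
    (h : ∀ A : ℕ → Set E, (∀ i, MeasurableSet (A i)) → ∀ n,
      P {ω | ∀ i < n, ξ i ω ∈ A i} = ∏ i ∈ Finset.range n, ν i (A i)) :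
    P.map (fun ω i => ξ i ω) = Measure.infinitePi ν := by
  classical
  refine Measure.eq_infinitePi _ fun s t ht => ?_
  obtain ⟨n, hsn⟩ := s.exists_nat_subset_range
  have hpre : (fun ω i => ξ i ω) ⁻¹' (s : Set ℕ).pi t =
      {ω | ∀ i < n, ξ i ω ∈ if i ∈ s then t i else univ} := by
    ext ω
    have hlt i (hi : i ∈ s) : i < n := Finset.mem_range.1 (hsn hi)
    simp only [mem_preimage, Set.mem_pi, Finset.mem_coe, mem_ofPred_eq]
    grind
  rw [Measure.map_apply (measurable_pi_lambda _ hξ) (.pi s.countable_toSet fun i _ => ht i), hpre,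
    h _ fun i => by split_ifs <;> simp [ht], ← Finset.prod_subset hsn fun i _ hi => by simp [hi]]
  exact Finset.prod_congr rfl fun i hi => by rw [if_pos hi]

/-- Doob's optional skipping theorem. -/
theorem map_subseqAt_eq_infinitePi {𝓕 : Filtration ℕ mΩ} {ν : Measure E}
    [IsProbabilityMeasure P] (hξ𝓕 : ∀ n, Measurable[𝓕 (n + 1)] (ξ n))
    (hind : ∀ n, Indep (𝓕 n) (.comap (ξ n) inferInstance) P) (hlaw : ∀ n, P.map (ξ n) = ν)
    (hinf : ∀ ω, {n | p ω n}.Infinite) (hp : ∀ n, MeasurableSet[𝓕 n] {ω | p ω n}) :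
    P.map (fun ω j => subseqAt (p ω) (ξ · ω) j) = Measure.infinitePi fun _ => ν := by
  have hξ n : Measurable (ξ n) := (hξ𝓕 n).mono (𝓕.le _) le_rfl
  have : IsProbabilityMeasure ν :=
    hlaw 0 ▸ Measure.isProbabilityMeasure_map (hξ 0).aemeasurable
  exact map_eq_infinitePi_of_forall_lt
    (measurable_subseqAt hinf (fun n => 𝓕.le n _ (hp n)) hξ)
    fun A hA j => measure_forall_lt_subseqAt_mem hξ𝓕 hind hlaw hinf hp hA j

end OptionalSkipping

section Iid

variable {Ω E : Type*} {mΩ : MeasurableSpace Ω} [MeasurableSpace E] {P : Measure Ω}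
  {ξ : ℕ → Ω → E}

/-- The filtration generated by the strict past of `ξ`: `past hξ n` only knows `ξ 0, …, ξ (n - 1)`,
so that a `past`-adapted choice of the index `n` is made before `ξ n` is seen. -/
def past (hξ : ∀ n, Measurable (ξ n)) : Filtration ℕ mΩ where
  seq n := ⨆ i < n, .comap (ξ i) inferInstance
  mono' _ _ hmn := iSup₂_le fun i hi =>
    le_iSup₂_of_le (f := fun i _ => MeasurableSpace.comap (ξ i) _) i (hi.trans_le hmn) le_rfl
  le' _ := iSup₂_le fun i _ => (hξ i).comap_le

lemma measurable_past (hξ : ∀ n, Measurable (ξ n)) {i n : ℕ} (hin : i < n) :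
    Measurable[past hξ n] (ξ i) :=
  measurable_iff_comap_le.2 <|
    le_iSup₂_of_le (f := fun i _ => MeasurableSpace.comap (ξ i) _) i hin le_rfl

lemma indep_past_shift (hξ : ∀ n, Measurable (ξ n)) (hindep : iIndepFun ξ P) (n : ℕ) :
    Indep (past hξ n) (.comap (fun ω k => ξ (k + n) ω) inferInstance) P := by
  have hdisj : Disjoint (Iio n) (Ici n) := Iio_disjoint_Ici le_rfl
  refine indep_of_indep_of_le_right
    (indep_iSup_of_disjoint (fun i => (hξ i).comap_le) hindep.iIndep hdisj) ?_
  refine measurable_iff_comap_le.1 (@measurable_pi_lambda _ _ _ (_) _ _ fun k =>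
    measurable_iff_comap_le.2 ?_)
  exact le_iSup₂_of_le (f := fun i _ => MeasurableSpace.comap (ξ i) _) (k + n)
    (Nat.le_add_left n k) le_rfl

lemma indep_past (hξ : ∀ n, Measurable (ξ n)) (hindep : iIndepFun ξ P) (n : ℕ) :
    Indep (past hξ n) (.comap (ξ n) inferInstance) P := by
  refine indep_of_indep_of_le_right (indep_past_shift hξ hindep n) ?_
  rw [show ξ n = (fun x : ℕ → E => x 0) ∘ fun ω k => ξ (k + n) ω by ext; simp,
    ← MeasurableSpace.comap_comp]
  exact MeasurableSpace.comap_mono (measurable_pi_apply 0).comap_le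

lemma indepFun_shift_one (hξ : ∀ n, Measurable (ξ n)) (hindep : iIndepFun ξ P) :
    IndepFun (ξ 0) (fun ω k => ξ (k + 1) ω) P :=
  (IndepFun_iff_Indep _ _ _).2 <| indep_of_indep_of_le_left (indep_past_shift hξ hindep 1)
    (measurable_iff_comap_le.1 (measurable_past hξ one_pos))

lemma identDistrib_shift [IsProbabilityMeasure P] (hindep : iIndepFun ξ P)
    (hid : ∀ n, IdentDistrib (ξ n) (ξ 0) P P) (n : ℕ) :
    IdentDistrib (fun ω k => ξ (k + n) ω) (fun ω k => ξ k ω) P P :=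
  .pi (fun k => (hid (k + n)).trans (hid k).symm) (hindep.precomp (add_left_injective n)) hindep

lemma tsum_measure_mul_le_one [IsProbabilityMeasure P] (hξ : ∀ n, Measurable (ξ n))
    (hindep : iIndepFun ξ P) (hid : ∀ n, IdentDistrib (ξ n) (ξ 0) P P)
    {R : ℕ → Set Ω} (hR : ∀ m, MeasurableSet[past hξ m] (R m))
    {B : Set (ℕ → E)} (hB : MeasurableSet B)
    (hdisj : Pairwise (Function.onFun Disjoint
      fun m => R m ∩ {ω | (fun k => ξ (k + m) ω) ∈ B})) :
    (∑' m, P (R m)) * P {ω | (fun k => ξ k ω) ∈ B} ≤ 1 := by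
  have hshift m : Measurable fun ω k => ξ (k + m) ω := measurable_pi_lambda _ fun k => hξ (k + m)
  calc (∑' m, P (R m)) * P {ω | (fun k => ξ k ω) ∈ B}
    _ = ∑' m, P (R m ∩ {ω | (fun k => ξ (k + m) ω) ∈ B}) := by
      rw [← ENNReal.tsum_mul_right]
      refine tsum_congr fun m => (Eq.trans ?_ (congrArg (P (R m) * ·)
        ((identDistrib_shift hindep hid m).measure_preimage_eq hB))).symm
      exact (Indep_iff _ _ _).1 (indep_past_shift hξ hindep m) _ _ (hR m) ⟨B, hB, rfl⟩
    _ = P (⋃ m, R m ∩ {ω | (fun k => ξ (k + m) ω) ∈ B}) :=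
      (measure_iUnion hdisj fun m => ((past hξ).le m _ (hR m)).inter (hshift m hB)).symm
    _ ≤ 1 := prob_le_one

end Iid

lemma lintegral_encard {Ω : Type*} [MeasurableSpace Ω] {P : Measure Ω} {p : Ω → ℕ → Prop}
    (hp : ∀ n, MeasurableSet {ω | p ω n}) :
    ∫⁻ ω, ({n | p ω n}.encard : ℝ≥0∞) ∂P = ∑' n, P {ω | p ω n} := by
  calc ∫⁻ ω, ({n | p ω n}.encard : ℝ≥0∞) ∂P
    _ = ∫⁻ ω, ∑' n, {ω | p ω n}.indicator 1 ω ∂P := by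
      refine lintegral_congr fun ω => ?_
      rw [← ENNReal.tsum_set_one, tsum_subtype _ fun _ => 1]
      rfl
    _ = ∑' n, P {ω | p ω n} := by
      rw [lintegral_tsum fun n => (measurable_one.indicator (hp n)).aemeasurable]
      exact tsum_congr fun n => lintegral_indicator_one (hp n)

section RandomWalk

variable {Ω : Type*} {mΩ : MeasurableSpace Ω} {P : Measure Ω}

lemma psum_add (x : ℕ → ℝ) (m n : ℕ) :
    psum x (m + n) = psum x m + psum (fun k => x (k + m)) n := by
  simp only [psum, Finset.sum_range_add]
  simp only [add_comm m]

lemma measurable_psum (n : ℕ) : Measurable fun x : ℕ → ℝ => psum x n := by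
  unfold psum
  fun_prop

lemma measurableSet_psum_nonneg :
    MeasurableSet {x : ℕ → ℝ | ∀ n, 1 ≤ n → 0 ≤ psum x n} := by
  simp only [ofPred_forall]
  exact .iInter fun n => .iInter fun _ => measurableSet_le measurable_const (measurable_psum n)

lemma ae_tendsto_psum_atTop {ξ : ℕ → Ω → ℝ} (hindep : Pairwise fun i j => IndepFun (ξ i) (ξ j) P)
    (hid : ∀ n, IdentDistrib (ξ n) (ξ 0) P P) (hint : Integrable (ξ 0) P)
    (hmean : 0 < ∫ ω, ξ 0 ω ∂P) :
    ∀ᵐ ω ∂P, Tendsto (psum fun k => ξ k ω) atTop atTop := by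
  filter_upwards [strong_law_ae_real ξ hint hindep hid] with ω hω
  refine (hω.pos_mul_atTop hmean tendsto_natCast_atTop_atTop).congr' ?_
  filter_upwards [eventually_ne_atTop 0] with n hn
  exact div_mul_cancel₀ _ (Nat.cast_ne_zero.2 hn)

lemma exists_forall_psum_shift_nonneg {x : ℕ → ℝ} (hx : Tendsto (psum x) atTop atTop) :
    ∃ m, ∀ n, 1 ≤ n → 0 ≤ psum (fun k => x (k + m)) n := by
  obtain ⟨m, hm⟩ := Tendsto.exists_forall_le (Nat.cofinite_eq_atTop ▸ hx)
  exact ⟨m, fun n _ => by linarith [hm (m + n), psum_add x m n]⟩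

lemma measure_psum_nonneg_ne_zero [IsProbabilityMeasure P] {ξ : ℕ → Ω → ℝ}
    (hindep : iIndepFun ξ P) (hid : ∀ n, IdentDistrib (ξ n) (ξ 0) P P)
    (hint : Integrable (ξ 0) P) (hmean : 0 < ∫ ω, ξ 0 ω ∂P) :
    P {ω | ∀ n, 1 ≤ n → 0 ≤ psum (fun k => ξ k ω) n} ≠ 0 := by
  intro hzero
  have hshift m : P {ω | ∀ n, 1 ≤ n → 0 ≤ psum (fun k => ξ (k + m) ω) n} = 0 :=
    ((identDistrib_shift hindep hid m).measure_preimage_eq measurableSet_psum_nonneg).trans hzero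
  have hex : ∀ᵐ ω ∂P, ∃ m, ∀ n, 1 ≤ n → 0 ≤ psum (fun k => ξ (k + m) ω) n :=
    (ae_tendsto_psum_atTop (fun _ _ => hindep.indepFun) hid hint hmean).mono
      fun _ => exists_forall_psum_shift_nonneg
  have hnot : ∀ᵐ ω ∂P, ∀ m, ¬∀ n, 1 ≤ n → 0 ≤ psum (fun k => ξ (k + m) ω) n :=
    ae_all_iff.2 fun m => measure_eq_zero_iff_ae_notMem.1 (hshift m)
  obtain ⟨ω, ⟨m, hm⟩, hω⟩ := (hex.and hnot).exists
  exact hω m hm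

lemma partialSups_psum_nonneg (y : ℕ → ℝ) (n : ℕ) : 0 ≤ partialSups (psum y) n := by
  simpa [psum] using le_partialSups_of_le (psum y) n.zero_le

/-- Lindley's recursion. -/
lemma partialSups_psum_succ (y : ℕ → ℝ) (n : ℕ) :
    partialSups (psum y) (n + 1) =
      max 0 (y 0 + partialSups (psum fun k => y (k + 1)) n) := by
  have htail : (fun k => psum y (k + 1)) = fun k => y 0 + psum (fun k => y (k + 1)) k := by
    ext k
    rw [add_comm k, psum_add]
    simp [psum]
  rw [partialSups_add_one', ← partialSups_const_add, ← htail]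
  simp [psum, Function.comp_def]

lemma measurable_partialSups_psum (n : ℕ) :
    Measurable fun y : ℕ → ℝ => partialSups (psum y) n := by
  induction n with
  | zero => simpa using measurable_psum 0
  | succ n ih =>
    simp only [partialSups_add_one]
    exact ih.sup (measurable_psum (n + 1))

lemma memLp_partialSups_psum {p : ℝ≥0∞} {Y : ℕ → Ω → ℝ} (hY : ∀ n, MemLp (Y n) p P) (n : ℕ) :
    MemLp (fun ω => partialSups (psum fun k => Y k ω) n) p P := by
  have hsum n : MemLp (fun ω => psum (fun k => Y k ω) n) p P :=
    memLp_finsetSum _ fun k _ => hY k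
  induction n with
  | zero => simpa using hsum 0
  | succ n ih =>
    simp only [partialSups_add_one]
    exact ih.sup (hsum (n + 1))

lemma neg_two_mul_integral_mul_integral_le {X Z : Ω → ℝ} (hX : MemLp X 2 P) (hZ : MemLp Z 2 P)
    (hXZ : IndepFun X Z P) (hle : ∫ ω, Z ω ^ 2 ∂P ≤ ∫ ω, (X ω + Z ω) ^ 2 ∂P) :
    -(2 * ((∫ ω, X ω ∂P) * ∫ ω, Z ω ∂P)) ≤ ∫ ω, X ω ^ 2 ∂P := by
  have hmul : Integrable (fun ω => 2 * (X ω * Z ω)) P := (hX.integrable_mul hZ).const_mul 2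
  have hsum : Integrable (fun ω => X ω ^ 2 + 2 * (X ω * Z ω)) P := hX.integrable_sq.add hmul
  have hexpand : ∫ ω, (X ω + Z ω) ^ 2 ∂P =
      ∫ ω, X ω ^ 2 ∂P + 2 * ((∫ ω, X ω ∂P) * ∫ ω, Z ω ∂P) + ∫ ω, Z ω ^ 2 ∂P := by
    calc ∫ ω, (X ω + Z ω) ^ 2 ∂P
      _ = ∫ ω, (X ω ^ 2 + 2 * (X ω * Z ω) + Z ω ^ 2) ∂P := by
        congr with ω
        ring
      _ = _ := by
        rw [integral_add hsum hZ.integrable_sq, integral_add hX.integrable_sq hmul,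
          integral_const_mul, hXZ.integral_fun_mul_eq_mul_integral hX.1 hZ.1]
  linarith

/-- Kingman's bound on the maximum of a random walk with negative drift. -/
theorem integral_partialSups_psum_le [IsProbabilityMeasure P] {Y : ℕ → Ω → ℝ}
    (hmeas : ∀ n, Measurable (Y n)) (hindep : iIndepFun Y P)
    (hid : ∀ n, IdentDistrib (Y n) (Y 0) P P) (hL2 : MemLp (Y 0) 2 P)
    (hneg : ∫ ω, Y 0 ω ∂P < 0) (n : ℕ) :
    ∫ ω, partialSups (psum fun k => Y k ω) n ∂P ≤
      (∫ ω, Y 0 ω ^ 2 ∂P) / (-(2 * ∫ ω, Y 0 ω ∂P)) := by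
  set M : ℕ → Ω → ℝ := fun n ω => partialSups (psum fun k => Y k ω) n
  set Z : Ω → ℝ := fun ω => partialSups (psum fun k => Y (k + 1) ω) n
  have hM n : MemLp (M n) 2 P := memLp_partialSups_psum (fun k => (hid k).symm.memLp_snd hL2) n
  have hMZ : IdentDistrib (M n) Z P P :=
    ((identDistrib_shift hindep hid 1).comp (measurable_partialSups_psum n)).symm
  have hZ : MemLp Z 2 P := hMZ.memLp_snd (hM n)
  have hYZ : IndepFun (Y 0) Z P :=
    (indepFun_shift_one hmeas hindep).comp measurable_id (measurable_partialSups_psum n)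
  have hsq : ∫ ω, Z ω ^ 2 ∂P ≤ ∫ ω, (Y 0 ω + Z ω) ^ 2 ∂P := by
    calc ∫ ω, Z ω ^ 2 ∂P
      _ = ∫ ω, M n ω ^ 2 ∂P := hMZ.sq.integral_eq.symm
      _ ≤ ∫ ω, (Y 0 ω + Z ω) ^ 2 ∂P := by
        refine integral_mono (hM n).integrable_sq (hL2.add hZ).integrable_sq fun ω => ?_
        have hmono : M n ω ≤ M (n + 1) ω := (partialSups _).monotone n.le_succ
        rw [show M (n + 1) ω = max 0 (Y 0 ω + Z ω) from partialSups_psum_succ _ n] at hmono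
        have hnonneg : 0 ≤ M n ω := partialSups_psum_nonneg _ n
        rcases le_max_iff.1 hmono with h | h <;> nlinarith
  have hkey := neg_two_mul_integral_mul_integral_le hL2 hZ hYZ hsq
  rw [hMZ.integral_eq, le_div_iff₀ (by linarith)]
  linarith

lemma lintegral_iSup_psum_lt_top [IsProbabilityMeasure P] {Y : ℕ → Ω → ℝ}
    (hmeas : ∀ n, Measurable (Y n)) (hindep : iIndepFun Y P)
    (hid : ∀ n, IdentDistrib (Y n) (Y 0) P P) (hL2 : MemLp (Y 0) 2 P)
    (hneg : ∫ ω, Y 0 ω ∂P < 0) :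
    ∫⁻ ω, ⨆ n, ENNReal.ofReal (psum (fun k => Y k ω) n) ∂P < ⊤ := by
  have hM n : Integrable (fun ω => partialSups (psum fun k => Y k ω) n) P :=
    (memLp_partialSups_psum (fun k => (hid k).symm.memLp_snd hL2) n).integrable one_le_two
  calc ∫⁻ ω, ⨆ n, ENNReal.ofReal (psum (fun k => Y k ω) n) ∂P
    _ ≤ ∫⁻ ω, ⨆ n, ENNReal.ofReal (partialSups (psum fun k => Y k ω) n) ∂P :=
      lintegral_mono fun ω => iSup_mono fun n => ENNReal.ofReal_le_ofReal (le_partialSups _ n)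
    _ = ⨆ n, ENNReal.ofReal (∫ ω, partialSups (psum fun k => Y k ω) n ∂P) := by
      have hmeasM n : Measurable fun ω => partialSups (psum fun k => Y k ω) n :=
        (measurable_partialSups_psum n).comp (measurable_pi_lambda _ hmeas)
      rw [lintegral_iSup (fun n => (hmeasM n).ennreal_ofReal)
        fun m n hmn ω => ENNReal.ofReal_le_ofReal ((partialSups _).monotone hmn)]
      exact iSup_congr fun n => (ofReal_integral_eq_lintegral_ofReal (hM n)
        (.of_forall fun ω => partialSups_psum_nonneg _ n)).symm
    _ ≤ ENNReal.ofReal ((∫ ω, Y 0 ω ^ 2 ∂P) / (-(2 * ∫ ω, Y 0 ω ∂P))) :=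
      iSup_le fun n => ENNReal.ofReal_le_ofReal
        (integral_partialSups_psum_le hmeas hindep hid hL2 hneg n)
    _ < ⊤ := ENNReal.ofReal_lt_top

lemma exists_integral_min_natCast_pos {X : Ω → ℝ} (hX : Integrable X P)
    (hmean : 0 < ∫ ω, X ω ∂P) : ∃ c : ℕ, 0 < ∫ ω, min (X ω) c ∂P := by
  have hlim : Tendsto (fun c : ℕ => ∫ ω, min (X ω) c ∂P) atTop (nhds (∫ ω, X ω ∂P)) := by
    refine tendsto_integral_of_dominated_convergence (fun ω => |X ω|)
      (fun c => hX.1.inf aestronglyMeasurable_const) hX.abs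
      (fun c => .of_forall fun ω => ?_) (.of_forall fun ω => ?_)
    · have hlower : -|X ω| ≤ c := by linarith [abs_nonneg (X ω), c.cast_nonneg (α := ℝ)]
      exact abs_le.2 ⟨le_min (neg_abs_le _) hlower, (min_le_left _ _).trans (le_abs_self _)⟩
    · refine tendsto_const_nhds.congr' ?_
      filter_upwards [tendsto_natCast_atTop_atTop.eventually_ge_atTop (X ω)] with c hc
      exact (min_eq_left hc).symm
  exact (hlim.eventually_const_lt hmean).exists

lemma memLp_min_const [IsFiniteMeasure P] {X : Ω → ℝ} {p : ℝ≥0∞}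
    (hX : AEStronglyMeasurable X P) (hneg : MemLp (fun ω => min (X ω) 0) p P) (c : ℝ) :
    MemLp (fun ω => min (X ω) c) p P := by
  refine (hneg.norm.add (memLp_const |c|)).of_le (hX.inf aestronglyMeasurable_const)
    (.of_forall fun ω => ?_)
  simp only [Real.norm_eq_abs, Pi.add_apply]
  grind

lemma lastTime_psum_mul_le {x : ℕ → ℝ} {δ : ℝ} (hδ : 0 < δ) :
    (lastTime fun n => psum x n ≤ 0 : ℝ≥0∞) * ENNReal.ofReal δ ≤
      ⨆ n, ENNReal.ofReal (psum (fun k => δ - x k) n) := by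
  have hδ0 : ENNReal.ofReal δ ≠ 0 := by simpa using hδ
  refine ENNReal.mul_le_of_le_div <| coe_lastTime_le_iff.2 fun n _ hn => ?_
  rw [ENNReal.le_div_iff_mul_le (.inl hδ0) (.inl ENNReal.ofReal_ne_top),
    ← ENNReal.ofReal_natCast, ← ENNReal.ofReal_mul n.cast_nonneg]
  refine le_iSup_of_le n (ENNReal.ofReal_le_ofReal ?_)
  have hpsum : psum (fun k => δ - x k) n = n * δ - psum x n := by simp [psum]
  linarith

theorem lintegral_lastTime_psum_lt_top [IsProbabilityMeasure P] {ξ : ℕ → Ω → ℝ}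
    (hmeas : ∀ n, Measurable (ξ n)) (hindep : iIndepFun ξ P)
    (hid : ∀ n, IdentDistrib (ξ n) (ξ 0) P P) (hint : Integrable (ξ 0) P)
    (hmean : 0 < ∫ ω, ξ 0 ω ∂P) (hneg : MemLp (fun ω => min (ξ 0 ω) 0) 2 P) :
    ∫⁻ ω, (lastTime fun n => psum (fun k => ξ k ω) n ≤ 0 : ℝ≥0∞) ∂P < ⊤ := by
  obtain ⟨c, hc⟩ := exists_integral_min_natCast_pos hint hmean
  set δ : ℝ := (∫ ω, min (ξ 0 ω) c ∂P) / 2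
  have hδ0 : 0 < δ := half_pos hc
  have hg : Measurable fun t : ℝ => δ - min t c := by fun_prop
  have hL2 := memLp_min_const hint.1 hneg c
  have hdrift : ∫ ω, (δ - min (ξ 0 ω) c) ∂P < 0 := by
    rw [integral_sub (integrable_const δ) (hL2.integrable one_le_two), integral_const,
      probReal_univ, one_smul, sub_neg]
    exact half_lt_self hc
  have hfin : ∫⁻ ω, ⨆ n, ENNReal.ofReal (psum (fun k => δ - min (ξ k ω) c) n) ∂P < ⊤ :=
    lintegral_iSup_psum_lt_top (fun n => hg.comp (hmeas n)) (hindep.comp (fun _ => _) fun _ => hg)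
      (fun n => (hid n).comp hg) ((memLp_const δ).sub hL2) hdrift
  refine ENNReal.lt_top_of_mul_ne_top_left (b := ENNReal.ofReal δ) (ne_of_lt ?_) (by simpa)
  rw [← lintegral_mul_const' _ _ ENNReal.ofReal_ne_top]
  refine (lintegral_mono fun ω => ?_).trans_lt hfin
  calc (lastTime fun n => psum (fun k => ξ k ω) n ≤ 0 : ℝ≥0∞) * ENNReal.ofReal δ
    _ ≤ (lastTime fun n => psum (fun k => min (ξ k ω) c) n ≤ 0 : ℝ≥0∞) * ENNReal.ofReal δ := by
      gcongr
      exact lastTime_mono fun n hn => (Finset.sum_le_sum fun k _ => min_le_left _ _).trans hn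
    _ ≤ ⨆ n, ENNReal.ofReal (psum (fun k => δ - min (ξ k ω) c) n) := lastTime_psum_mul_le hδ0

end RandomWalk

namespace deCusum

variable {x : ℕ → ℝ} {μ h w : ℝ}

lemma succ_of_neg {n : ℕ} (hn : deCusum x μ h w n < 0) :
    deCusum x μ h w (n + 1) = min (deCusum x μ h w n + μ) 0 := by
  rw [deCusum, if_pos hn]

lemma succ_of_nonneg {n : ℕ} (hn : 0 ≤ deCusum x μ h w n) :
    deCusum x μ h w (n + 1) = max (deCusum x μ h w n + x n) (-h) := by
  rw [deCusum, if_neg hn.not_gt]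

lemma neg_le_apply (hμ : 0 ≤ μ) (hw : -h ≤ w) (n : ℕ) : -h ≤ deCusum x μ h w n := by
  induction n with
  | zero => exact hw
  | succ n ih =>
    rcases lt_or_ge (deCusum x μ h w n) 0 with hn | hn
    · rw [succ_of_neg hn]
      exact le_min (by linarith) (by linarith)
    · rw [succ_of_nonneg hn]
      exact le_max_right _ _

lemma lt_apply_succ (hμ : 0 < μ) (hw : w < -h) (n : ℕ) : w < deCusum x μ h w (n + 1) := by
  have hstep n (hn : w ≤ deCusum x μ h w n) : w < deCusum x μ h w (n + 1) := by
    rcases lt_or_ge (deCusum x μ h w n) 0 with hneg | hnonneg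
    · rw [succ_of_neg hneg]
      exact lt_min (by linarith) (by linarith)
    · rw [succ_of_nonneg hnonneg]
      exact lt_max_of_lt_right hw
  induction n with
  | zero => exact hstep 0 le_rfl
  | succ n ih => exact hstep (n + 1) ih.le

lemma lastTime_eq_zero (hμ : 0 < μ) (hw : w < -h) :
    lastTime (fun n => deCusum x μ h w n ≤ w) = 0 := by
  refine le_zero_iff.1 (lastTime_le_iff.2 fun n hn hle => ?_)
  obtain ⟨k, rfl⟩ := Nat.exists_eq_add_of_le' hn
  exact absurd hle (lt_apply_succ hμ hw k).not_ge

/-- `m` is a time at which the statistic comes back to the nonnegative half-line. The truncated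
subtraction makes this false at `m = 0`, and the event only depends on the past of `m`. -/
def IsReturn (x : ℕ → ℝ) (μ h w : ℝ) (m : ℕ) : Prop :=
  deCusum x μ h w (m - 1) < 0 ∧ 0 ≤ deCusum x μ h w m

lemma exists_isReturn (hμ : 0 < μ) {c m : ℕ} (hneg : deCusum x μ h w m < 0)
    (hc : -(c * μ) ≤ deCusum x μ h w m) :
    ∃ k ∈ Finset.Icc 1 c, IsReturn x μ h w (m + k) := by
  induction c generalizing m with
  | zero => exact absurd hneg (by simpa using hc)
  | succ c ih =>
    have hstep := succ_of_neg hneg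
    rcases lt_or_ge (deCusum x μ h w (m + 1)) 0 with hlt | hge
    · have hle : -(c * μ) ≤ deCusum x μ h w (m + 1) := by
        rw [hstep]
        push_cast at hc
        exact le_min (by linarith) (neg_nonpos.2 (by positivity))
      obtain ⟨k, hk, hret⟩ := ih hlt hle
      rw [Finset.mem_Icc] at hk
      exact ⟨1 + k, Finset.mem_Icc.2 (by lia), by rwa [← add_assoc]⟩
    · exact ⟨1, by simp, hneg, hge⟩

lemma infinite_nonneg (hμ : 0 < μ) : {n | 0 ≤ deCusum x μ h w n}.Infinite := by
  refine Nat.frequently_atTop_iff_infinite.1 (frequently_atTop.2 fun n => ?_)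
  rcases le_or_gt 0 (deCusum x μ h w n) with hn | hn
  · exact ⟨n, le_rfl, hn⟩
  · obtain ⟨c, hc⟩ := exists_nat_ge (-deCusum x μ h w n / μ)
    rw [div_le_iff₀ hμ] at hc
    obtain ⟨k, -, hret⟩ := exists_isReturn hμ hn (neg_le.1 hc)
    exact ⟨n + k, Nat.le_add_right n k, hret.2⟩

lemma add_psum_subseqAt_le (hμ : 0 ≤ μ) (n : ℕ) :
    w + psum (subseqAt (fun n => 0 ≤ deCusum x μ h w n) x)
      (Nat.count (fun n => 0 ≤ deCusum x μ h w n) n) ≤ deCusum x μ h w n := by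
  induction n with
  | zero => simp [psum, deCusum]
  | succ n ih =>
    rcases lt_or_ge (deCusum x μ h w n) 0 with hn | hn
    · rw [Nat.count_succ, if_neg hn.not_ge, add_zero, succ_of_neg hn]
      exact le_min (by linarith) (by linarith)
    · rw [Nat.count_succ, if_pos hn, succ_of_nonneg hn, psum, Finset.sum_range_succ,
        subseqAt_count (p := fun n => 0 ≤ deCusum x μ h w n) x hn, ← psum, ← add_assoc]
      exact le_max_of_le_left (by gcongr)

lemma lastTime_le_add_encard (hμ : 0 ≤ μ) :
    lastTime (fun n => deCusum x μ h w n ≤ w) ≤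
      lastTime (fun n => psum (subseqAt (fun n => 0 ≤ deCusum x μ h w n) x) n ≤ 0) +
        {n | deCusum x μ h w n < 0}.encard := by
  refine lastTime_le_iff.2 fun n _ hn => ?_
  set used := Nat.count (fun k => 0 ≤ deCusum x μ h w k) n with hused
  set skipped := (Finset.range n).filter fun k => deCusum x μ h w k < 0 with hskipped
  have hsplit : used + skipped.card = n := by
    simp only [hused, hskipped, Nat.count_eq_card_filter_range, ← not_le]
    rw [Finset.card_filter_add_card_filter_not, Finset.card_range]
  have hpsum : psum (subseqAt (fun k => 0 ≤ deCusum x μ h w k) x) used ≤ 0 := by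
    linarith [add_psum_subseqAt_le (x := x) (h := h) (w := w) hμ n]
  calc (n : ℕ∞)
    _ = used + skipped.card := by exact_mod_cast hsplit.symm
    _ ≤ _ := add_le_add ?_ ?_
  · rcases Nat.eq_zero_or_pos used with h0 | h0
    · simp [h0]
    · exact le_lastTime h0 hpsum
  · rw [← Set.encard_coe_eq_coe_finsetCard]
    exact Set.encard_le_encard fun k hk => (Finset.mem_filter.1 hk).2

lemma psum_shift_le {m : ℕ} (hm : 0 ≤ deCusum x μ h w m)
    (hpos : ∀ n, 1 ≤ n → 0 ≤ psum (fun k => x (k + m)) n) (n : ℕ) :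
    psum (fun k => x (k + m)) n ≤ deCusum x μ h w (m + n) := by
  induction n with
  | zero => simpa [psum]
  | succ n ih =>
    have hn : 0 ≤ deCusum x μ h w (m + n) := by
      rcases n.eq_zero_or_pos with rfl | hn
      · exact hm
      · exact (hpos n hn).trans ih
    rw [← add_assoc, succ_of_nonneg hn, psum, Finset.sum_range_succ, ← psum, add_comm n m]
    exact le_max_of_le_left (by gcongr)

lemma not_isReturn_of_lt {m n : ℕ} (hm : 0 ≤ deCusum x μ h w m)
    (hpos : ∀ n, 1 ≤ n → 0 ≤ psum (fun k => x (k + m)) n) (hmn : m < n) :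
    ¬ IsReturn x μ h w n := by
  rintro ⟨hneg, -⟩
  obtain ⟨k, rfl⟩ := Nat.exists_eq_add_of_lt hmn
  rw [Nat.add_sub_cancel] at hneg
  rcases k.eq_zero_or_pos with rfl | hk
  · exact hm.not_gt hneg
  · exact ((hpos k hk).trans (psum_shift_le hm hpos k)).not_gt hneg

section Random

variable {Ω : Type*} {mΩ : MeasurableSpace Ω} {P : Measure Ω} {ξ : ℕ → Ω → ℝ}

lemma measurable_apply (μ h w : ℝ) (n : ℕ) (hξ : ∀ i < n, Measurable (ξ i)) :
    Measurable fun ω => deCusum (fun k => ξ k ω) μ h w n := by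
  induction n with
  | zero => simp only [deCusum, measurable_const]
  | succ n ih =>
    have hn := ih fun i hi => hξ i (hi.trans n.lt_succ_self)
    simp only [deCusum]
    exact .ite (measurableSet_lt hn measurable_const) ((hn.add_const μ).min measurable_const)
      ((hn.add (hξ n n.lt_succ_self)).max measurable_const)

lemma measurable_past_apply (hξ : ∀ n, Measurable (ξ n)) (μ h w : ℝ) {m n : ℕ} (hmn : m ≤ n) :
    Measurable[past hξ n] fun ω => deCusum (fun k => ξ k ω) μ h w m :=
  measurable_apply (mΩ := past hξ n) μ h w m fun _ hi => measurable_past hξ (hi.trans_le hmn)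

lemma tsum_measure_neg_le (hμ : 0 < μ) (hw : -h ≤ w) :
    ∑' n, P {ω | deCusum (fun k => ξ k ω) μ h w n < 0} ≤
      ⌈h / μ⌉₊ * ∑' n, P {ω | IsReturn (fun k => ξ k ω) μ h w n} := by
  set R : ℕ → Set Ω := fun n => {ω | IsReturn (fun k => ξ k ω) μ h w n}
  have hcover n : P {ω | deCusum (fun k => ξ k ω) μ h w n < 0} ≤
      ∑ k ∈ Finset.Icc 1 ⌈h / μ⌉₊, P (R (n + k)) := by
    refine (measure_mono fun ω hω => ?_).trans (measure_biUnion_finset_le _ _)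
    have hc : -(⌈h / μ⌉₊ * μ) ≤ deCusum (fun k => ξ k ω) μ h w n :=
      (neg_le_neg ((div_le_iff₀ hμ).1 (Nat.le_ceil _))).trans (neg_le_apply hμ.le hw n)
    obtain ⟨k, hk, hret⟩ := exists_isReturn hμ hω hc
    exact mem_biUnion hk hret
  calc ∑' n, P {ω | deCusum (fun k => ξ k ω) μ h w n < 0}
    _ ≤ ∑' n, ∑ k ∈ Finset.Icc 1 ⌈h / μ⌉₊, P (R (n + k)) := ENNReal.tsum_le_tsum hcover
    _ = ∑ k ∈ Finset.Icc 1 ⌈h / μ⌉₊, ∑' n, P (R (n + k)) :=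
      Summable.tsum_finsetSum fun _ _ => ENNReal.summable
    _ ≤ ∑ _k ∈ Finset.Icc 1 ⌈h / μ⌉₊, ∑' n, P (R n) := Finset.sum_le_sum fun k _ =>
      ENNReal.tsum_comp_le_tsum_of_injective (add_left_injective k) _
    _ = ⌈h / μ⌉₊ * ∑' n, P (R n) := by simp

-- After a return, with probability `q` the walk restarted there never goes negative, and that
-- return is then the last one.
lemma tsum_measure_isReturn_mul_le_one [IsProbabilityMeasure P] (hξ : ∀ n, Measurable (ξ n))
    (hindep : iIndepFun ξ P) (hid : ∀ n, IdentDistrib (ξ n) (ξ 0) P P) :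
    (∑' n, P {ω | IsReturn (fun k => ξ k ω) μ h w n}) *
      P {ω | ∀ n, 1 ≤ n → 0 ≤ psum (fun k => ξ k ω) n} ≤ 1 := by
  have hR m : MeasurableSet[past hξ m] {ω | IsReturn (fun k => ξ k ω) μ h w m} :=
    .inter
      (measurableSet_lt (measurable_past_apply hξ μ h w (Nat.sub_le m 1)) measurable_const)
      (measurableSet_le measurable_const (measurable_past_apply hξ μ h w le_rfl))
  refine tsum_measure_mul_le_one hξ hindep hid hR measurableSet_psum_nonneg fun m n hmn => ?_
  wlog hlt : m < n generalizing m n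
  · exact (this n m hmn.symm (hmn.lt_or_gt.resolve_left hlt)).symm
  exact Set.disjoint_left.2 fun _ hm hn => not_isReturn_of_lt hm.1.2 hm.2 hlt hn.1

lemma identDistrib_subseqAt_nonneg [IsProbabilityMeasure P] (hξ : ∀ n, Measurable (ξ n))
    (hindep : iIndepFun ξ P) (hid : ∀ n, IdentDistrib (ξ n) (ξ 0) P P) (hμ : 0 < μ) :
    IdentDistrib (fun ω => subseqAt (fun n => 0 ≤ deCusum (fun k => ξ k ω) μ h w n) (ξ · ω))
      (fun ω k => ξ k ω) P P := by
  have hinf ω : {n | 0 ≤ deCusum (fun k => ξ k ω) μ h w n}.Infinite := infinite_nonneg hμ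
  have hpast n : MeasurableSet[past hξ n] {ω | 0 ≤ deCusum (fun k => ξ k ω) μ h w n} :=
    measurableSet_le measurable_const (measurable_past_apply hξ μ h w le_rfl)
  have hused := measurable_pi_lambda _
    (measurable_subseqAt hinf (fun n => (past hξ).le n _ (hpast n)) hξ)
  refine ⟨hused.aemeasurable, (measurable_pi_lambda _ hξ).aemeasurable, ?_⟩
  rw [hindep.map_fun_eq_infinitePi_map hξ]
  simp only [(hid _).map_eq]
  exact map_subseqAt_eq_infinitePi (fun n => measurable_past hξ n.lt_succ_self)
    (indep_past hξ hindep) (fun n => (hid n).map_eq) hinf hpast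

lemma lintegral_lastTime_le_add_tsum [IsProbabilityMeasure P] (hξ : ∀ n, Measurable (ξ n))
    (hindep : iIndepFun ξ P) (hid : ∀ n, IdentDistrib (ξ n) (ξ 0) P P) (hμ : 0 < μ) :
    ∫⁻ ω, (lastTime fun n => deCusum (fun k => ξ k ω) μ h w n ≤ w : ℝ≥0∞) ∂P ≤
      (∫⁻ ω, (lastTime fun n => psum (fun k => ξ k ω) n ≤ 0 : ℝ≥0∞) ∂P) +
        ∑' n, P {ω | deCusum (fun k => ξ k ω) μ h w n < 0} := by
  have hlast : Measurable fun x : ℕ → ℝ => (lastTime fun n => psum x n ≤ 0 : ℝ≥0∞) :=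
    measurable_lastTime fun n => measurableSet_le (measurable_psum n) measurable_const
  have hused := identDistrib_subseqAt_nonneg (h := h) (w := w) hξ hindep hid hμ
  have hlastUsed : AEMeasurable (fun ω => (lastTime fun n => psum
      (subseqAt (fun n => 0 ≤ deCusum (fun k => ξ k ω) μ h w n) (ξ · ω)) n ≤ 0 : ℝ≥0∞)) P :=
    hlast.comp_aemeasurable hused.aemeasurable_fst
  have hneg n : MeasurableSet {ω | deCusum (fun k => ξ k ω) μ h w n < 0} :=
    measurableSet_lt (measurable_apply μ h w n fun i _ => hξ i) measurable_const
  calc ∫⁻ ω, (lastTime fun n => deCusum (fun k => ξ k ω) μ h w n ≤ w : ℝ≥0∞) ∂P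
    _ ≤ ∫⁻ ω, ((lastTime fun n => psum
            (subseqAt (fun n => 0 ≤ deCusum (fun k => ξ k ω) μ h w n) (ξ · ω)) n ≤ 0 : ℝ≥0∞) +
          ({n | deCusum (fun k => ξ k ω) μ h w n < 0}.encard : ℝ≥0∞)) ∂P := by
      refine lintegral_mono fun ω => ?_
      rw [← ENat.toENNReal_add]
      exact ENat.toENNReal_le.2 (lastTime_le_add_encard hμ.le)
    _ = (∫⁻ ω, (lastTime fun n => psum (fun k => ξ k ω) n ≤ 0 : ℝ≥0∞) ∂P) +
          ∑' n, P {ω | deCusum (fun k => ξ k ω) μ h w n < 0} := by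
      rw [lintegral_add_left' hlastUsed, lintegral_encard hneg]
      exact congrArg (· + _) (hused.comp hlast).lintegral_eq

theorem lintegral_lastTime_le [IsProbabilityMeasure P] (hξ : ∀ n, Measurable (ξ n))
    (hindep : iIndepFun ξ P) (hid : ∀ n, IdentDistrib (ξ n) (ξ 0) P P) (hμ : 0 < μ) :
    ∫⁻ ω, (lastTime fun n => deCusum (fun k => ξ k ω) μ h w n ≤ w : ℝ≥0∞) ∂P ≤
      (∫⁻ ω, (lastTime fun n => psum (fun k => ξ k ω) n ≤ 0 : ℝ≥0∞) ∂P) +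
        (⌈h / μ⌉₊ : ℝ≥0∞) / P {ω | ∀ n, 1 ≤ n → 0 ≤ psum (fun k => ξ k ω) n} := by
  rcases lt_or_ge w (-h) with hw | hw
  · simp [lastTime_eq_zero hμ hw]
  refine (lintegral_lastTime_le_add_tsum hξ hindep hid hμ).trans (add_le_add_right ?_ _)
  refine (tsum_measure_neg_le hμ hw).trans ?_
  rw [div_eq_mul_inv]
  exact mul_le_mul' le_rfl
    (ENNReal.le_inv_iff_mul_le.2 (tsum_measure_isReturn_mul_le_one hξ hindep hid))

end Random

end deCusum

theorem deCusum_lastExit_bound_general {Ω : Type*} [MeasurableSpace Ω] (P : Measure Ω)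
    [IsProbabilityMeasure P] (ξ : ℕ → Ω → ℝ) (hmeas : ∀ n, Measurable (ξ n))
    (hindep : iIndepFun ξ P)
    (hid : ∀ n, IdentDistrib (ξ n) (ξ 0) P P)
    (hint : Integrable (ξ 0) P) (hmean : 0 < ∫ ω, ξ 0 ω ∂P)
    (hneg : MemLp (fun ω => min (ξ 0 ω) 0) 2 P) (μ h w : ℝ) (hμ : 0 < μ) :
    ∫⁻ ω, (lastTime (fun n => deCusum (fun k => ξ k ω) μ h w n ≤ w) : ℝ≥0∞) ∂P ≤
        (∫⁻ ω, (lastTime (fun n => psum (fun k => ξ k ω) n ≤ 0) : ℝ≥0∞) ∂P) +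
          (⌈h / μ⌉₊ : ℝ≥0∞) / P {ω | ∀ n : ℕ, 1 ≤ n → 0 ≤ psum (fun k => ξ k ω) n} ∧
      (∫⁻ ω, (lastTime (fun n => psum (fun k => ξ k ω) n ≤ 0) : ℝ≥0∞) ∂P) +
          (⌈h / μ⌉₊ : ℝ≥0∞) / P {ω | ∀ n : ℕ, 1 ≤ n → 0 ≤ psum (fun k => ξ k ω) n} < ⊤ ∧
      ∀ᵐ ω ∂P, lastTime (fun n => deCusum (fun k => ξ k ω) μ h w n ≤ w) < ⊤ := by
  have hle := deCusum.lintegral_lastTime_le (h := h) (w := w) hmeas hindep hid hμ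
  have hfin := ENNReal.add_lt_top.2
    ⟨lintegral_lastTime_psum_lt_top hmeas hindep hid hint hmean hneg,
      ENNReal.div_lt_top (ENNReal.natCast_ne_top ⌈h / μ⌉₊)
        (measure_psum_nonneg_ne_zero hindep hid hint hmean)⟩
  refine ⟨hle, hfin, ?_⟩
  have hlast := measurable_lastTime fun n => measurableSet_le
    (deCusum.measurable_apply μ h w n fun i _ => hmeas i) (measurable_const (a := w))
  exact (ae_lt_top hlast (hle.trans_lt hfin).ne).mono fun _ => ENat.toENNReal_lt_top.1

/-- Lemma 1: for i.i.d. increments with positive mean and finite second moment, the last exit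
time `ν_W = sup{n ≥ 1 : W_n ≤ w}` of the DE-CuSum statistic started at `w ≥ 0` satisfies
`E[ν_W] ≤ E[ν_R] + ⌈h/μ⌉/q < ∞`, where `ν_R = sup{n ≥ 1 : S_n ≤ 0}` and
`q = ℙ(S_n ≥ 0 for all n ≥ 1)`; in particular `ν_W` is finite almost surely, and its
expectation is bounded by a finite constant independent of any detection threshold. -/
theorem deCusum_lastExit_bound {Ω : Type*} [MeasurableSpace Ω] (P : Measure Ω)
    [IsProbabilityMeasure P] (ξ : ℕ → Ω → ℝ) (hmeas : ∀ n, Measurable (ξ n))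
    (hindep : iIndepFun ξ P)
    (hid : ∀ n, IdentDistrib (ξ n) (ξ 0) P P)
    (hint : Integrable (ξ 0) P) (hmean : 0 < ∫ ω, ξ 0 ω ∂P)
    (hvar : Integrable (fun ω => (ξ 0 ω) ^ 2) P)
    (μ h w : ℝ) (hμ : 0 < μ) (hh : 0 ≤ h) (hw : 0 ≤ w) :
    ∫⁻ ω, (lastTime (fun n => deCusum (fun k => ξ k ω) μ h w n ≤ w) : ℝ≥0∞) ∂P ≤
        (∫⁻ ω, (lastTime (fun n => psum (fun k => ξ k ω) n ≤ 0) : ℝ≥0∞) ∂P) +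
          (⌈h / μ⌉₊ : ℝ≥0∞) / P {ω | ∀ n : ℕ, 1 ≤ n → 0 ≤ psum (fun k => ξ k ω) n} ∧
      (∫⁻ ω, (lastTime (fun n => psum (fun k => ξ k ω) n ≤ 0) : ℝ≥0∞) ∂P) +
          (⌈h / μ⌉₊ : ℝ≥0∞) / P {ω | ∀ n : ℕ, 1 ≤ n → 0 ≤ psum (fun k => ξ k ω) n} < ⊤ ∧
      ∀ᵐ ω ∂P, lastTime (fun n => deCusum (fun k => ξ k ω) μ h w n ≤ w) < ⊤ := by
  have hL2 : MemLp (ξ 0) 2 P := (memLp_two_iff_integrable_sq hint.1).2 hvar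
  exact deCusum_lastExit_bound_general P ξ hmeas hindep hid hint hmean
    (hL2.inf (memLp_const 0)) μ h w hμ
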